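/- arXiv:2507.23075 — 2 statements merged into one kernel-verified Lean document; each statement's English description precedes it below -/
import Mathlib

section
/- Every polynomial function f on M_n(ℂ) × M_n(ℂ) that is invariant under simultaneous conjugation (i.e. f(g X g⁻¹, g Y g⁻¹) = f(X,Y) for all g ∈ GL_n(ℂ) and all (X,Y)) agrees at every point of Ĉ_n with some element of the ℂ-subalgebra of polynomial functions generated by {(X,Y) ↦ tr(X^a · Y^b) : 0 ≤ a ≤ n, 0 ≤ b ≤ n}. -/
open MvPolynomial Matrix

/-- Polynomial functions on `M_n(ℂ) × M_n(ℂ)`, represented as polynomials in the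
entries of the two matrices. -/
abbrev PolyFun (n : ℕ) := MvPolynomial ((Fin n × Fin n) ⊕ (Fin n × Fin n)) ℂ

/-- The matrix of coordinate functions `X_{jk}`. -/
noncomputable def Xmat (n : ℕ) : Matrix (Fin n) (Fin n) (PolyFun n) :=
  fun i j => MvPolynomial.X (Sum.inl (i, j))

/-- The matrix of coordinate functions `Y_{jk}`. -/
noncomputable def Ymat (n : ℕ) : Matrix (Fin n) (Fin n) (PolyFun n) :=
  fun i j => MvPolynomial.X (Sum.inr (i, j))

/-- Traceless part `A = X - (tr X / n) I_n`. -/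
noncomputable def Amat (n : ℕ) : Matrix (Fin n) (Fin n) (PolyFun n) :=
  Xmat n - (MvPolynomial.C ((n : ℂ)⁻¹) * Matrix.trace (Xmat n)) • (1 : Matrix (Fin n) (Fin n) (PolyFun n))

/-- Traceless part `B = Y - (tr Y / n) I_n`. -/
noncomputable def Bmat (n : ℕ) : Matrix (Fin n) (Fin n) (PolyFun n) :=
  Ymat n - (MvPolynomial.C ((n : ℂ)⁻¹) * Matrix.trace (Ymat n)) • (1 : Matrix (Fin n) (Fin n) (PolyFun n))

/-- The polynomial function `(X,Y) ↦ tr (A^p B^q)`. -/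
noncomputable def trAB (n p q : ℕ) : PolyFun n :=
  Matrix.trace (Amat n ^ p * Bmat n ^ q)

/-- The polynomial function `(X,Y) ↦ tr (X^a Y^b)`. -/
noncomputable def trXY (n a b : ℕ) : PolyFun n :=
  Matrix.trace (Xmat n ^ a * Ymat n ^ b)

/-- The Poisson bracket
`{F,G} = Σ_{j,k} ∂F/∂X_{jk} ∂G/∂Y_{kj} − ∂F/∂Y_{jk} ∂G/∂X_{kj}`. -/
noncomputable def pbracket {n : ℕ} (F G : PolyFun n) : PolyFun n :=
  ∑ j : Fin n, ∑ k : Fin n,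
    (MvPolynomial.pderiv (Sum.inl (j, k)) F * MvPolynomial.pderiv (Sum.inr (k, j)) G
      - MvPolynomial.pderiv (Sum.inr (j, k)) F * MvPolynomial.pderiv (Sum.inl (k, j)) G)

/-- Evaluation of a polynomial function at a pair of matrices. -/
noncomputable def evalP {n : ℕ} (X Y : Matrix (Fin n) (Fin n) ℂ) (F : PolyFun n) : ℂ :=
  MvPolynomial.eval (Sum.elim (fun p => X p.1 p.2) (fun p => Y p.1 p.2)) F

/-- The Calogero–Moser variety `Ĉ_n = {(X,Y) : rank([X,Y] − i I_n) = 1}`. -/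
def Chat (n : ℕ) : Set (Matrix (Fin n) (Fin n) ℂ × Matrix (Fin n) (Fin n) ℂ) :=
  {P | ((P.1 * P.2 - P.2 * P.1) - Complex.I • (1 : Matrix (Fin n) (Fin n) ℂ)).rank = 1}

/-- The traceless Calogero–Moser variety
`Ŝ_n = {(X,Y) : tr X = tr Y = 0, rank([X,Y] − i I_n) = 1}`. -/
def Shat (n : ℕ) : Set (Matrix (Fin n) (Fin n) ℂ × Matrix (Fin n) (Fin n) ℂ) :=
  {P | Matrix.trace P.1 = 0 ∧ Matrix.trace P.2 = 0 ∧
    ((P.1 * P.2 - P.2 * P.1) - Complex.I • (1 : Matrix (Fin n) (Fin n) ℂ)).rank = 1}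

/-- The set `ℱ = {tr A², tr B², tr A³, (tr AB)²}`. -/
noncomputable def calF (n : ℕ) : Set (PolyFun n) :=
  {trAB n 2 0, trAB n 0 2, trAB n 3 0, (trAB n 1 1) ^ 2}

/-- The smallest ℂ-linear subspace of the polynomial functions containing `S`
and closed under the Poisson bracket. -/
inductive LieGen (n : ℕ) (S : Set (PolyFun n)) : PolyFun n → Prop
  | base {f : PolyFun n} : f ∈ S → LieGen n S f
  | zero : LieGen n S 0
  | add {f g : PolyFun n} : LieGen n S f → LieGen n S g → LieGen n S (f + g)
  | smul (c : ℂ) {f : PolyFun n} : LieGen n S f → LieGen n S (c • f)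
  | bracket {f g : PolyFun n} : LieGen n S f → LieGen n S g → LieGen n S (pbracket f g)

theorem exists_det_ne_zero_of_commutator_form {K S : Type*} [Field K] [CharZero K] [Algebra ℂ K]
    [Ring S] [Algebra ℂ S] (b : S →ₗ[ℂ] K) (x y : S) (c : ℂ) (hc : c ≠ 0) (n : ℕ)
    (hb : ∀ U W : S, b (U * (x * y - y * x - c • 1) * W) = b U * b W)
    (h1 : b 1 = -(algebraMap ℂ K c * n)) :
    ∃ U W : Fin n → S, (Matrix.of fun i j => b (U i * W j)).det ≠ 0 := by
  classical
  by_contra hn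
  let P : ℕ → Prop := fun m => ∃ U W : Fin m → S, (Matrix.of fun i j => b (U i * W j)).det ≠ 0
  have hex : ∃ m, ¬ P m := ⟨n, hn⟩
  have hle : Nat.find hex ≤ n := Nat.find_min' hex hn
  obtain ⟨m, hm⟩ : ∃ m, Nat.find hex = m + 1 := by
    refine Nat.exists_eq_succ_of_ne_zero fun h0 => ?_
    have := Nat.find_spec hex
    rw [h0] at this
    exact this ⟨fun _ => 1, fun _ => 1, by simp⟩
  have hlast : ¬ P (m + 1) := hm ▸ Nat.find_spec hex
  obtain ⟨U, W, hdet⟩ : P m := not_not.1 (Nat.find_min hex (m := m) (by omega))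
  set M : Matrix (Fin m) (Fin m) K := Matrix.of fun i j => b (U i * W j) with hM
  have hMu : IsUnit M.det := isUnit_iff_ne_zero.2 hdet
  let _ := M.invertibleOfIsUnitDet hMu
  have key : ∀ U₀ Z₀ : S,
      b (U₀ * Z₀) = (fun j => b (U₀ * W j)) ⬝ᵥ (M⁻¹ *ᵥ fun k => b (U k * Z₀)) := by
    intro U₀ Z₀
    by_contra hne
    apply hlast
    refine ⟨Sum.elim U (fun _ : Fin 1 => U₀) ∘ finSumFinEquiv.symm,
      Sum.elim W (fun _ : Fin 1 => Z₀) ∘ finSumFinEquiv.symm, ?_⟩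
    have : (Matrix.of fun i j => b ((Sum.elim U (fun _ : Fin 1 => U₀) ∘ finSumFinEquiv.symm) i *
        (Sum.elim W (fun _ : Fin 1 => Z₀) ∘ finSumFinEquiv.symm) j)) =
        (Matrix.fromBlocks M (Matrix.of fun i (_ : Fin 1) => b (U i * Z₀))
          (Matrix.of fun (_ : Fin 1) j => b (U₀ * W j))
          (Matrix.of fun (_ : Fin 1) (_ : Fin 1) => b (U₀ * Z₀))).submatrix
          finSumFinEquiv.symm finSumFinEquiv.symm := by
      ext i j
      simp only [Matrix.of_apply, Matrix.submatrix_apply, Function.comp]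
      rcases finSumFinEquiv.symm i with i | i <;> rcases finSumFinEquiv.symm j with j | j <;>
        simp [M]
    rw [this, Matrix.det_submatrix_equiv_self, Matrix.det_fromBlocks₁₁, Matrix.invOf_eq_nonsing_inv]
    refine mul_ne_zero hdet ?_
    rw [Matrix.det_unique, Matrix.sub_apply, Matrix.mul_assoc, sub_ne_zero]
    exact hne
  let G : S → Matrix (Fin m) (Fin m) K := fun Z => Matrix.of fun i j => b (U i * Z * W j)
  have hG : ∀ Z Z', G (Z * Z') = G Z * M⁻¹ * G Z' := by
    intro Z Z'
    ext i j
    rw [Matrix.mul_assoc, Matrix.mul_apply_eq_vecMul]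
    have := key (U i * Z) (Z' * W j)
    simp only [G, Matrix.of_apply]
    rw [show U i * (Z * Z') * W j = U i * Z * (Z' * W j) by simp only [mul_assoc], this]
    simp only [← mul_assoc]
    rfl
  have hcomm : G x * M⁻¹ * G y - G y * M⁻¹ * G x - algebraMap ℂ K c • M =
      Matrix.vecMulVec (fun i => b (U i)) (fun j => b (W j)) := by
    rw [← hG, ← hG]
    ext i j
    simp only [G, M, Matrix.sub_apply, Matrix.smul_apply, Matrix.of_apply, Matrix.vecMulVec_apply,
      ← hb]
    simp only [mul_sub, sub_mul, map_sub, mul_smul_comm, mul_one, smul_mul_assoc, map_smul,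
      algebraMap_smul]
  have htr := congrArg (fun Z => Matrix.trace (Z * M⁻¹)) hcomm
  simp only [Matrix.sub_mul, Matrix.trace_sub, Matrix.smul_mul, Matrix.mul_nonsing_inv _ hMu,
    Matrix.trace_smul, Matrix.trace_one, Fintype.card_fin, Matrix.vecMulVec_mul] at htr
  have h2 : Matrix.trace (Matrix.vecMulVec (fun i => b (U i)) ((fun j => b (W j)) ᵥ* M⁻¹)) = b 1 := by
    have := key 1 1
    simp only [one_mul, mul_one] at this
    rw [this, Matrix.trace_vecMulVec, dotProduct_comm, Matrix.dotProduct_mulVec]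
  rw [h2, h1, Matrix.mul_assoc (G x * M⁻¹), Matrix.trace_mul_comm (G x * M⁻¹), ← Matrix.mul_assoc,
    sub_self] at htr
  have hc' : algebraMap ℂ K c ≠ 0 := by simpa using hc
  have : (m : K) = n := by
    simp only [zero_sub, neg_inj, smul_eq_mul] at htr
    exact mul_left_cancel₀ hc' htr
  have : m = n := by exact_mod_cast this
  omega

theorem derivative_charpoly_eq_trace_adjugate {R : Type*} [CommRing R] {n : ℕ}
    (M : Matrix (Fin n) (Fin n) R) :
    Polynomial.derivative M.charpoly = M.charmatrix.adjugate.trace := by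
  set A := M.charmatrix with hA
  have hder : ∀ i j, Polynomial.derivative (A i j) = if i = j then 1 else 0 := by
    intro i j
    rcases eq_or_ne i j with rfl | h
    · simp [A, Matrix.charmatrix_apply_eq]
    · simp [A, h]
  simp only [Matrix.charpoly, Matrix.trace, Matrix.diag_apply, Matrix.adjugate_apply,
    Matrix.det_apply, Polynomial.derivative_sum]
  rw [Finset.sum_comm]
  refine Finset.sum_congr rfl fun σ _ => ?_
  rw [← Equiv.sum_comp σ, Polynomial.derivative_smul, Polynomial.derivative_prod_finset, Finset.smul_sum]
  refine Finset.sum_congr rfl fun j _ => ?_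
  congr 1
  rw [← Finset.prod_erase_mul _ _ (Finset.mem_univ j), ← hA, hder]
  congr 1
  · refine Finset.prod_congr rfl fun k hk => ?_
    rw [Matrix.updateRow_ne]
    simpa using Finset.ne_of_mem_erase hk
  · rw [Matrix.updateRow_self, Pi.single_apply]
    simp only [eq_comm]

theorem adjugate_charmatrix_coeff {R : Type*} [CommRing R] {n : ℕ}
    (M : Matrix (Fin n) (Fin n) R) (j : ℕ) :
    (matPolyEquiv M.charmatrix.adjugate).coeff j =
      ∑ l ∈ Finset.range (n - j), M.charpoly.coeff (j + 1 + l) • M ^ l := by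
  nontriviality R
  set q := matPolyEquiv M.charmatrix.adjugate with hq
  have hmul : q * (Polynomial.X - Polynomial.C M) =
      M.charpoly.map (algebraMap R (Matrix (Fin n) (Fin n) R)) := by
    rw [← matPolyEquiv_charmatrix, hq, ← map_mul, Matrix.adjugate_mul, ← Matrix.charpoly,
      matPolyEquiv_smul_one]
  have hrec : ∀ j, q.coeff j = M.charpoly.coeff (j + 1) • 1 + q.coeff (j + 1) * M := by
    intro j
    have := congrArg (fun p => p.coeff (j + 1)) hmul
    simp only [mul_sub, Polynomial.coeff_sub, Polynomial.coeff_mul_X, Polynomial.coeff_mul_C,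
      Polynomial.coeff_map, Algebra.algebraMap_eq_smul_one] at this
    rw [← this, sub_add_cancel]
  have hiter : ∀ L j, q.coeff j =
      (∑ l ∈ Finset.range L, M.charpoly.coeff (j + 1 + l) • M ^ l) + q.coeff (j + L) * M ^ L := by
    intro L
    induction L with
    | zero => simp
    | succ L ih =>
      intro j
      rw [ih j, hrec (j + L), Finset.sum_range_succ, add_mul, smul_mul_assoc, one_mul, mul_assoc,
        ← pow_succ', ← add_assoc, show j + L + 1 = j + 1 + L by omega,
        show j + (L + 1) = j + 1 + L by omega]
  have hvan : ∀ k, n < k → M.charpoly.coeff k = 0 := fun k hk =>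
    Polynomial.coeff_eq_zero_of_natDegree_lt (by simpa using hk)
  have hzero : ∀ j, n ≤ j → q.coeff j = 0 := by
    intro j hj
    rw [hiter (q.natDegree + 1) j, Polynomial.coeff_eq_zero_of_natDegree_lt (by omega), zero_mul,
      add_zero]
    exact Finset.sum_eq_zero fun l _ => by rw [hvan _ (by omega), zero_smul]
  rw [hiter (n - j) j, hzero (j + (n - j)) (by omega), zero_mul, add_zero]

theorem charpoly_coeff_newton {R : Type*} [CommRing R] {n : ℕ}
    (M : Matrix (Fin n) (Fin n) R) (i : ℕ) (hi : i ≤ n) :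
    ((n - i : ℕ) : R) * M.charpoly.coeff i =
      - ∑ l ∈ Finset.range (n - i), M.charpoly.coeff (i + 1 + l) * (M ^ (l + 1)).trace := by
  nontriviality R
  suffices h : (i : R) * M.charpoly.coeff i =
      ∑ l ∈ Finset.range (n - i + 1), M.charpoly.coeff (i + l) * (M ^ l).trace by
    rw [Finset.sum_range_succ'] at h
    simp only [add_zero, pow_zero, Matrix.trace_one, Fintype.card_fin] at h
    have hshift : ∀ l, i + (l + 1) = i + 1 + l := fun l => by omega
    rw [Finset.sum_congr rfl fun l _ => by rw [hshift l]] at h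
    rw [Nat.cast_sub hi]
    linear_combination -h
  cases i with
  | zero =>
    have := congrArg Matrix.trace (Matrix.aeval_self_charpoly M)
    rw [Polynomial.aeval_eq_sum_range, Matrix.charpoly_natDegree_eq_dim, Fintype.card_fin,
      Matrix.trace_sum] at this
    simpa using this.symm
  | succ j =>
    have h := congrArg (fun p => p.coeff j) (derivative_charpoly_eq_trace_adjugate M)
    have h2 : (Matrix.trace M.charmatrix.adjugate).coeff j =
        Matrix.trace ((matPolyEquiv M.charmatrix.adjugate).coeff j) := by
      simp [Matrix.trace, matPolyEquiv_coeff_apply, Polynomial.finsetSum_coeff]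
    simp only [h2, adjugate_charmatrix_coeff, Polynomial.coeff_derivative, Matrix.trace_sum,
      Matrix.trace_smul, smul_eq_mul] at h
    rw [show n - (j + 1) + 1 = n - j by omega, ← h]
    push_cast
    ring

theorem charpoly_coeff_mem {R : Type*} [CommRing R] [Algebra ℂ R] (A : Subalgebra ℂ R) {n : ℕ}
    (M : Matrix (Fin n) (Fin n) R) (hM : ∀ k ≤ n, (M ^ k).trace ∈ A) (i : ℕ) :
    M.charpoly.coeff i ∈ A := by
  nontriviality R
  rcases lt_or_ge n i with hi | hi
  · rw [Polynomial.coeff_eq_zero_of_natDegree_lt (by simpa using hi)]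
    exact A.zero_mem
  induction h : n - i using Nat.strong_induction_on generalizing i with
  | _ d ih =>
    subst h
    rcases hi.eq_or_lt with rfl | hlt
    · have := M.charpoly_monic.coeff_natDegree
      rw [Matrix.charpoly_natDegree_eq_dim, Fintype.card_fin] at this
      rw [this]
      exact A.one_mem
    have hne : ((n - i : ℕ) : ℂ) ≠ 0 := by
      rw [Nat.cast_ne_zero]; omega
    have hmem : ((n - i : ℕ) : R) * M.charpoly.coeff i ∈ A := by
      rw [charpoly_coeff_newton M i hi]
      refine A.neg_mem (A.sum_mem fun l hl => ?_)
      rw [Finset.mem_range] at hl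
      exact A.mul_mem (ih _ (by omega) _ (by omega) rfl) (hM _ (by omega))
    have : M.charpoly.coeff i =
        (((n - i : ℕ) : ℂ)⁻¹) • (((n - i : ℕ) : R) * M.charpoly.coeff i) := by
      rw [← nsmul_eq_mul, ← Nat.cast_smul_eq_nsmul ℂ, smul_smul, inv_mul_cancel₀ hne, one_smul]
    rw [this]
    exact A.smul_mem hmem _

theorem trace_pow_mul_mem {R : Type*} [CommRing R] [Algebra ℂ R] (A : Subalgebra ℂ R) {n : ℕ}
    (M N : Matrix (Fin n) (Fin n) R) (hM : ∀ k ≤ n, (M ^ k).trace ∈ A)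
    (hMN : ∀ k ≤ n, (M ^ k * N).trace ∈ A) (k : ℕ) : (M ^ k * N).trace ∈ A := by
  nontriviality R
  induction k using Nat.strong_induction_on with
  | _ k ih =>
    rcases le_or_gt k n with hk | hk
    · exact hMN k hk
    have hch := Matrix.aeval_self_charpoly M
    have hlead : M.charpoly.coeff n = 1 := by
      have := M.charpoly_monic.coeff_natDegree
      rwa [Matrix.charpoly_natDegree_eq_dim, Fintype.card_fin] at this
    rw [Polynomial.aeval_eq_sum_range, Matrix.charpoly_natDegree_eq_dim, Fintype.card_fin,
      Finset.sum_range_succ, hlead, one_smul] at hch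
    have hpow : M ^ k * N =
        -∑ i ∈ Finset.range n, M.charpoly.coeff i • (M ^ (i + (k - n)) * N) := by
      rw [← Nat.add_sub_of_le hk.le, pow_add, eq_neg_of_add_eq_zero_right hch]
      simp [Finset.sum_mul, pow_add]
    rw [hpow, Matrix.trace_neg, Matrix.trace_sum]
    refine A.neg_mem (A.sum_mem fun i hi => ?_)
    rw [Finset.mem_range] at hi
    rw [Matrix.trace_smul]
    exact A.mul_mem (charpoly_coeff_mem A M hM i) (ih _ (by omega))

theorem trace_mul_vecMulVec_mul_vecMulVec {R : Type*} [CommRing R] {n : ℕ}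
    (U W : Matrix (Fin n) (Fin n) R) (v w : Fin n → R) :
    (U * vecMulVec v w * W * vecMulVec v w).trace =
      (U * vecMulVec v w).trace * (W * vecMulVec v w).trace := by
  have h : ∀ Z : Matrix (Fin n) (Fin n) R, (Z * vecMulVec v w).trace = w ⬝ᵥ Z *ᵥ v := fun Z => by
    rw [Matrix.mul_vecMulVec, Matrix.trace_vecMulVec, dotProduct_comm]
  rw [h, h, h, Matrix.mul_assoc, ← Matrix.mulVec_mulVec, ← Matrix.mulVec_mulVec,
    Matrix.vecMulVec_mulVec]
  simp [Matrix.mulVec_smul, mul_comm]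

theorem sum_pow_mul_commutator_mul_pow {S : Type*} [Ring S] (x y : S) (m : ℕ) :
    ∑ k ∈ Finset.range (m + 1), y ^ k * (x * y - y * x) * y ^ (m - k) =
      x * y ^ (m + 1) - y ^ (m + 1) * x := by
  have h := Finset.sum_range_sub' (fun k => y ^ k * x * y ^ (m + 1 - k)) (m + 1)
  simp only [pow_zero, one_mul, Nat.sub_self, mul_one, Nat.sub_zero] at h
  rw [← h]
  refine Finset.sum_congr rfl fun k hk => ?_
  rw [Finset.mem_range] at hk
  rw [show m + 1 - k = (m - k) + 1 by omega, show m + 1 - (k + 1) = m - k by omega, pow_succ' y (m - k),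
    pow_succ y k]
  noncomm_ring

theorem trace_list_prod_mul_commutator_mem {R : Type*} [CommRing R] [Algebra ℂ R]
    (A : Subalgebra ℂ R) {n : ℕ} (x y : Matrix (Fin n) (Fin n) R) (v w : Fin n → R) (c : ℂ)
    (hT : x * y - y * x - c • 1 = vecMulVec v w)
    (hxy : ∀ a b : ℕ, (x ^ a * y ^ b).trace ∈ A) (l : List Bool) :
    ((l.map fun t => cond t x y).prod * vecMulVec v w).trace ∈ A := by
  induction hd : l.length using Nat.strong_induction_on generalizing l with
  | _ d ih =>
  subst hd
  set T := vecMulVec v w with hTdef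
  let e : List Bool → Matrix (Fin n) (Fin n) R := fun l => (l.map fun t => cond t x y).prod
  have he : ∀ u l, e (u ++ l) = e u * e l := fun u l => by simp [e]
  have hcomm : x * y - y * x = T + c • 1 := by rw [← hT]; abel
  have hxyT : ∀ u l', u.length + l'.length < l.length →
      (e u * (x * y - y * x) * e l' * T).trace ∈ A := by
    intro u l' hlen
    rw [hcomm, mul_add, add_mul, add_mul, Matrix.trace_add,
      trace_mul_vecMulVec_mul_vecMulVec]
    refine A.add_mem (A.mul_mem (ih _ (by omega) _ rfl) (ih _ (by omega) _ rfl)) ?_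
    rw [mul_smul_comm, mul_one, smul_mul_assoc, ← he, smul_mul_assoc, Matrix.trace_smul]
    exact A.smul_mem (ih _ (by simpa using hlen) _ rfl) c
  have hperm : ∀ l₁ l₂ : List Bool, l₁.Perm l₂ → ∀ u : List Bool,
      u.length + l₁.length = l.length →
      (e (u ++ l₁) * T).trace - (e (u ++ l₂) * T).trace ∈ A := by
    intro l₁ l₂ h
    induction h with
    | nil => intro u _; simp
    | @cons t l₁ l₂ _ ih =>
      intro u hu
      simpa using ih (u ++ [t]) (by simp at hu ⊢; omega)
    | @swap s t l' =>
      intro u hu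
      simp only [List.length_cons] at hu
      rw [← Matrix.trace_sub, ← sub_mul]
      have hmem := hxyT u l' (by omega)
      cases s <;> cases t
      · simp
      · convert! hmem using 3
        simp [e]
        noncomm_ring
      · rw [← neg_mem_iff]
        convert! hmem using 1
        rw [← Matrix.trace_neg]
        congr 1
        simp [e]
        noncomm_ring
      · simp
    | @trans l₁ l₂ l₃ h₁ _ ih₁ ih₂ =>
      intro u hu
      have := A.add_mem (ih₁ u hu) (ih₂ u (by rw [← h₁.length_eq, hu]))
      simpa using this
  set a := l.count true with ha
  set b := l.count false with hb
  have hrep : ∀ k m, e (List.replicate k false ++ (List.replicate a true ++ List.replicate m false))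
      = y ^ k * (x ^ a * y ^ m) := fun k m => by simp [e]
  have hk : ∀ k ∈ Finset.range (b + 1),
      (e l * T).trace - (y ^ (b - k) * (x ^ a * y ^ k) * T).trace ∈ A := by
    intro k hk
    rw [Finset.mem_range] at hk
    rw [← hrep]
    refine hperm l _ ?_ [] (by simp)
    rw [List.perm_iff_count]
    intro t
    cases t
    · simp [List.count_replicate, hb]
      omega
    · simp [List.count_replicate, ha]
  have hsum : ∑ k ∈ Finset.range (b + 1), (y ^ (b - k) * (x ^ a * y ^ k) * T).trace =
      -((b + 1 : ℕ) • c • (x ^ a * y ^ b).trace) := by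
    have h := congrArg (fun Z => (x ^ a * Z).trace) (sum_pow_mul_commutator_mul_pow x y b)
    have h0 : (x ^ a * (x * y ^ (b + 1) - y ^ (b + 1) * x)).trace = 0 := by
      rw [mul_sub, Matrix.trace_sub, ← mul_assoc, ← pow_succ, pow_succ', mul_assoc,
        Matrix.trace_mul_comm, mul_assoc, sub_self]
    simp only [h0, hcomm, Finset.mul_sum, Matrix.trace_sum] at h
    rw [eq_neg_iff_add_eq_zero, ← h]
    rw [← Finset.card_range (b + 1), ← Finset.sum_const, Finset.card_range, ← Finset.sum_add_distrib]
    refine Finset.sum_congr rfl fun k hk => ?_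
    rw [Finset.mem_range] at hk
    rw [mul_add, add_mul, mul_add, Matrix.trace_add, mul_smul_comm, mul_one, smul_mul_assoc, ← pow_add,
      show k + (b - k) = b by omega, mul_smul_comm, Matrix.trace_smul, ← mul_assoc, ← mul_assoc,
      Matrix.trace_mul_comm _ (y ^ (b - k))]
    simp only [mul_assoc]
  have hfin := A.sum_mem hk
  rw [Finset.sum_sub_distrib, hsum, Finset.sum_const, Finset.card_range] at hfin
  have h2 : (b + 1 : ℕ) • (e l * T).trace ∈ A := by
    have := A.sub_mem hfin (A.nsmul_mem (A.smul_mem (hxy a b) c) (b + 1))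
    simpa using this
  rw [← Nat.cast_smul_eq_nsmul ℂ] at h2
  have := A.smul_mem h2 (((b + 1 : ℕ) : ℂ)⁻¹)
  rwa [smul_smul, inv_mul_cancel₀ (Nat.cast_ne_zero.2 (Nat.succ_ne_zero b)), one_smul] at this

theorem trace_mul_commutator_mem_of_mem_adjoin {R : Type*} [CommRing R] [Algebra ℂ R]
    (A : Subalgebra ℂ R) {n : ℕ} (x y : Matrix (Fin n) (Fin n) R) (v w : Fin n → R) (c : ℂ)
    (hT : x * y - y * x - c • 1 = vecMulVec v w)
    (hxy : ∀ a b : ℕ, (x ^ a * y ^ b).trace ∈ A) {U : Matrix (Fin n) (Fin n) R}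
    (hU : U ∈ Algebra.adjoin ℂ {x, y}) : (U * vecMulVec v w).trace ∈ A := by
  rw [← Subalgebra.mem_toSubmodule, Algebra.adjoin_eq_span] at hU
  induction hU using Submodule.span_induction with
  | mem U hU =>
    obtain ⟨l, rfl⟩ : ∃ l : List Bool, (l.map fun t => cond t x y).prod = U := by
      induction hU using Submonoid.closure_induction_left with
      | one => exact ⟨[], rfl⟩
      | mul_left z hz U _ ih =>
        obtain ⟨l, rfl⟩ := ih
        rcases hz with rfl | rfl
        · exact ⟨true :: l, by simp⟩
        · exact ⟨false :: l, by simp⟩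
    exact trace_list_prod_mul_commutator_mem A x y v w c hT hxy l
  | zero => simp
  | add U W _ _ hU hW =>
    rw [add_mul, Matrix.trace_add]
    exact A.add_mem hU hW
  | smul a U _ hU =>
    rw [smul_mul_assoc, Matrix.trace_smul]
    exact A.smul_mem hU a

theorem exists_eq_vecMulVec_of_rank_eq_one {n : ℕ} (T : Matrix (Fin n) (Fin n) ℂ)
    (hT : T.rank = 1) : ∃ v w : Fin n → ℂ, T = vecMulVec v w := by
  obtain ⟨v, -, hv⟩ := finrank_eq_one_iff'.1 hT
  choose a ha using fun j => hv ⟨T.mulVecLin (Pi.single j 1), LinearMap.mem_range_self _ _⟩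
  refine ⟨v, a, ?_⟩
  ext i j
  have := congrFun (congrArg Subtype.val (ha j)) i
  simpa [Matrix.vecMulVec_apply, mul_comm] using this.symm

theorem exists_pow_mul_eval_eq {S σ : Type*} (A : Subalgebra ℂ (S → ℂ)) (D : S → ℂ) (hD : D ∈ A)
    (g : σ → S → ℂ) (hg : ∀ s, g s ∈ A) (f : MvPolynomial σ ℂ) :
    ∃ N : ℕ, ∃ h ∈ A, ∀ (p : S) (z : σ → ℂ), (∀ s, D p * z s = g s p) →
      D p ^ N * MvPolynomial.eval z f = h p := by
  induction f using MvPolynomial.induction_on with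
  | C a => exact ⟨0, algebraMap ℂ (S → ℂ) a, A.algebraMap_mem a, fun p z _ => by simp⟩
  | add f₁ f₂ ih₁ ih₂ =>
    obtain ⟨N₁, h₁, hh₁, H₁⟩ := ih₁
    obtain ⟨N₂, h₂, hh₂, H₂⟩ := ih₂
    refine ⟨N₁ + N₂, D ^ N₂ * h₁ + D ^ N₁ * h₂, A.add_mem (A.mul_mem (A.pow_mem hD _) hh₁)
      (A.mul_mem (A.pow_mem hD _) hh₂), fun p z hz => ?_⟩
    simp only [Pi.add_apply, Pi.mul_apply, Pi.pow_apply, ← H₁ p z hz, ← H₂ p z hz, map_add]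
    ring
  | mul_X f s ih =>
    obtain ⟨N, h, hh, H⟩ := ih
    refine ⟨N + 1, h * g s, A.mul_mem hh (hg s), fun p z hz => ?_⟩
    simp only [Pi.mul_apply, ← H p z hz, ← hz s, map_mul, MvPolynomial.eval_X]
    ring

theorem det_smul_conj_eq {n : ℕ} (P Q X : Matrix (Fin n) (Fin n) ℂ) (hP : IsUnit P.det) :
    (Q * P).det • (P⁻¹ * X * P) = (Q * P).adjugate * (Q * X * P) := by
  have hX : Q * X * P = (Q * P) * (P⁻¹ * X * P) := by
    simp only [Matrix.mul_assoc]
    rw [← Matrix.mul_assoc P, Matrix.mul_nonsing_inv _ hP, Matrix.one_mul]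
  rw [hX, ← Matrix.mul_assoc, Matrix.adjugate_mul, Matrix.smul_mul, Matrix.one_mul]

theorem exists_pow_mul_invariant_mem {S : Type*} (A : Subalgebra ℂ (S → ℂ)) {n : ℕ}
    (x y P Q : Matrix (Fin n) (Fin n) (S → ℂ)) (hQP : ∀ i j, (Q * P) i j ∈ A)
    (hx : ∀ i j, (Q * x * P) i j ∈ A) (hy : ∀ i j, (Q * y * P) i j ∈ A) (f : PolyFun n)
    (hf : ∀ g : GL (Fin n) ℂ, ∀ X Y : Matrix (Fin n) (Fin n) ℂ,
      evalP ((g : Matrix (Fin n) (Fin n) ℂ) * X * ((g⁻¹ : GL (Fin n) ℂ) : Matrix (Fin n) (Fin n) ℂ))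
            ((g : Matrix (Fin n) (Fin n) ℂ) * Y * ((g⁻¹ : GL (Fin n) ℂ) : Matrix (Fin n) (Fin n) ℂ)) f
        = evalP X Y f) :
    ∃ N : ℕ, (Q * P).det ^ N *
      (fun p => evalP (x.map (· p)) (y.map (· p)) f : S → ℂ) ∈ A := by
  obtain ⟨B, hB⟩ : ∃ B : Matrix (Fin n) (Fin n) A, B.map A.val = Q * P :=
    ⟨Matrix.of fun i j => ⟨_, hQP i j⟩, rfl⟩
  have hD : (Q * P).det ∈ A := by
    rw [← hB]
    exact (AlgHom.map_det A.val B) ▸ B.det.2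
  have hadj : ∀ i j, (Q * P).adjugate i j ∈ A := by
    intro i j
    rw [← hB]
    have := AlgHom.map_adjugate A.val B
    rw [AlgHom.mapMatrix_apply, AlgHom.mapMatrix_apply] at this
    rw [← this]
    exact (B.adjugate i j).2
  obtain ⟨N, h, hh, H⟩ := exists_pow_mul_eval_eq A (Q * P).det hD
    (Sum.elim (fun q => ((Q * P).adjugate * (Q * x * P)) q.1 q.2)
      (fun q => ((Q * P).adjugate * (Q * y * P)) q.1 q.2))
    (by
      rintro (q | q)
      · rw [Sum.elim_inl, Matrix.mul_apply]
        exact A.sum_mem fun k _ => A.mul_mem (hadj _ _) (hx _ _)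
      · rw [Sum.elim_inr, Matrix.mul_apply]
        exact A.sum_mem fun k _ => A.mul_mem (hadj _ _) (hy _ _)) f
  refine ⟨N + 1, ?_⟩
  suffices heq : (Q * P).det ^ (N + 1) *
      (fun p => evalP (x.map (· p)) (y.map (· p)) f : S → ℂ) = (Q * P).det * h by
    rw [heq]
    exact A.mul_mem hD hh
  funext p
  simp only [Pi.mul_apply, Pi.pow_apply]
  by_cases h0 : (Q * P).det p = 0
  · simp [h0]
  let ev : (S → ℂ) →+* ℂ := Pi.evalRingHom (fun _ => ℂ) p
  have hmul : ∀ M N : Matrix (Fin n) (Fin n) (S → ℂ), (M * N).map ev = M.map ev * N.map ev :=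
    fun M N => Matrix.map_mul
  have hdet : (Q * P).det p = (Q.map ev * P.map ev).det := by
    rw [← hmul]
    exact RingHom.map_det ev (Q * P)
  have hadjp : (Q * P).adjugate.map ev = (Q.map ev * P.map ev).adjugate := by
    rw [← hmul]
    exact RingHom.map_adjugate ev (Q * P)
  have hP : IsUnit (P.map ev).det := by
    rw [isUnit_iff_ne_zero]
    intro hz
    rw [hdet, Matrix.det_mul, hz, mul_zero] at h0
    exact h0 rfl
  have hconj := hf (Matrix.nonsingInvUnit _ hP)⁻¹ (x.map ev) (y.map ev)
  have hval : evalP (x.map (· p)) (y.map (· p)) f =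
      evalP ((P.map ev)⁻¹ * x.map ev * P.map ev) ((P.map ev)⁻¹ * y.map ev * P.map ev) f := by
    rw [inv_inv] at hconj
    exact hconj.symm
  rw [hval, pow_succ', mul_assoc]
  congr 1
  refine H p _ ?_
  have hentry : ∀ Z : Matrix (Fin n) (Fin n) (S → ℂ), ∀ i j,
      (Q * P).det p * ((P.map ev)⁻¹ * Z.map ev * P.map ev) i j =
        ((Q * P).adjugate * (Q * Z * P)) i j p := by
    intro Z i j
    have h1 := congrFun (congrFun (det_smul_conj_eq (P.map ev) (Q.map ev) (Z.map ev) hP) i) j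
    rw [← hmul Q Z, ← hmul (Q * Z) P, ← hadjp, ← hdet, ← hmul] at h1
    exact h1
  rintro (q | q)
  · exact hentry x q.1 q.2
  · exact hentry y q.1 q.2

theorem invariant_mem_of_trace_mem {S : Type*} (A : Subalgebra ℂ (S → ℂ)) {n : ℕ}
    (x y : Matrix (Fin n) (Fin n) (S → ℂ)) (v w : Fin n → S → ℂ) (c : ℂ) (hc : c ≠ 0)
    (hT : x * y - y * x - c • 1 = vecMulVec v w)
    (hxy : ∀ a b : ℕ, a ≤ n → b ≤ n → (x ^ a * y ^ b).trace ∈ A) (f : PolyFun n)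
    (hf : ∀ g : GL (Fin n) ℂ, ∀ X Y : Matrix (Fin n) (Fin n) ℂ,
      evalP ((g : Matrix (Fin n) (Fin n) ℂ) * X * ((g⁻¹ : GL (Fin n) ℂ) : Matrix (Fin n) (Fin n) ℂ))
            ((g : Matrix (Fin n) (Fin n) ℂ) * Y * ((g⁻¹ : GL (Fin n) ℂ) : Matrix (Fin n) (Fin n) ℂ)) f
        = evalP X Y f) :
    (fun p => evalP (x.map (· p)) (y.map (· p)) f : S → ℂ) ∈ A := by
  set F : S → ℂ := fun p => evalP (x.map (· p)) (y.map (· p)) f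
  have hxy' : ∀ a b : ℕ, b ≤ n → (x ^ a * y ^ b).trace ∈ A := fun a b hb =>
    trace_pow_mul_mem A x (y ^ b) (fun k hk => by simpa using hxy k 0 hk (Nat.zero_le n))
      (fun k hk => hxy k b hk hb) a
  have hall : ∀ a b : ℕ, (x ^ a * y ^ b).trace ∈ A := fun a b => by
    rw [Matrix.trace_mul_comm]
    refine trace_pow_mul_mem A y (x ^ a) (fun k hk => by simpa using hxy' 0 k hk) (fun k hk => ?_) b
    rw [Matrix.trace_mul_comm]
    exact hxy' a k hk
  let W := Algebra.adjoin ℂ {x, y}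
  let xW : W := ⟨x, Algebra.subset_adjoin (by simp)⟩
  let yW : W := ⟨y, Algebra.subset_adjoin (by simp)⟩
  let β : W →ₗ[ℂ] A :=
    { toFun := fun U => ⟨_, trace_mul_commutator_mem_of_mem_adjoin A x y v w c hT hall U.2⟩
      map_add' := fun U V => by ext1; simp [add_mul]
      map_smul' := fun a U => by ext1; simp }
  have hβ : ∀ U V : W, β (U * (xW * yW - yW * xW - c • 1) * V) = β U * β V := fun U V => by
    ext1
    have := trace_mul_vecMulVec_mul_vecMulVec U.1 V.1 v w
    rw [← hT] at this
    simpa [β, ← hT, xW, yW] using this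
  have hβ1 : β 1 = -(algebraMap ℂ A c * n) := by
    ext1
    simp [β, ← hT, Matrix.trace_mul_comm x y]
    rw [Algebra.smul_def]
  let J : Ideal A :=
    { carrier := {a | (a : S → ℂ) * F ∈ A}
      add_mem' := fun {a b} ha hb => by simpa [add_mul] using A.add_mem ha hb
      zero_mem' := by simp
      smul_mem' := fun a b hb => by
        simpa [mul_assoc] using A.mul_mem a.2 hb }
  by_cases hJ : J = ⊤
  · have h1 : (1 : A) ∈ J := hJ ▸ Submodule.mem_top
    simpa [J] using h1
  exfalso
  obtain ⟨m, hm, hJm⟩ := Ideal.exists_le_maximal J hJ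
  let _ : Field (A ⧸ m) := Ideal.Quotient.field m
  have : CharZero (A ⧸ m) := charZero_of_injective_algebraMap (algebraMap ℂ (A ⧸ m)).injective
  obtain ⟨U, V, hdet⟩ := exists_det_ne_zero_of_commutator_form
    ((Ideal.Quotient.mkₐ ℂ m).toLinearMap ∘ₗ β) xW yW c hc n
    (fun U V => by simp [-Ideal.Quotient.mkₐ_eq_mk, hβ]) (by
      simp only [LinearMap.comp_apply, hβ1, AlgHom.toLinearMap_apply, map_neg, map_mul,
        AlgHom.commutes, map_natCast])
  let P : Matrix (Fin n) (Fin n) (S → ℂ) := Matrix.of fun a j => (V j).1.mulVec v a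
  let Q : Matrix (Fin n) (Fin n) (S → ℂ) := Matrix.of fun i a => (w ᵥ* (U i).1) a
  have hQP : ∀ Z : Matrix (Fin n) (Fin n) (S → ℂ), ∀ i j, (Q * Z * P) i j =
      ((U i).1 * Z * (V j).1 * vecMulVec v w).trace := by
    intro Z i j
    rw [Matrix.mul_vecMulVec, Matrix.trace_vecMulVec, dotProduct_comm, ← Matrix.mulVec_mulVec,
      ← Matrix.mulVec_mulVec, Matrix.dotProduct_mulVec, Matrix.dotProduct_mulVec]
    rfl
  have hQP1 : ∀ i j, (Q * P) i j = (β (U i * V j) : S → ℂ) := by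
    intro i j
    simpa [β] using hQP 1 i j
  obtain ⟨N, hN⟩ := exists_pow_mul_invariant_mem A x y P Q
    (fun i j => hQP1 i j ▸ (β (U i * V j)).2)
    (fun i j => hQP x i j ▸ (β (U i * xW * V j)).2)
    (fun i j => hQP y i j ▸ (β (U i * yW * V j)).2) f hf
  let B : Matrix (Fin n) (Fin n) A := Matrix.of fun i j => β (U i * V j)
  have hB : (B.det : S → ℂ) = (Q * P).det := by
    have h := AlgHom.map_det A.val B
    rw [show A.val.mapMatrix B = Q * P from Matrix.ext fun i j => (hQP1 i j).symm] at h
    exact h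
  have hBm : B.det ∈ m := by
    refine hm.isPrime.mem_of_pow_mem N (hJm ?_)
    change ((B.det ^ N : A) : S → ℂ) * F ∈ A
    rw [A.coe_pow, hB]
    exact hN
  apply hdet
  have := AlgHom.map_det (Ideal.Quotient.mkₐ ℂ m) B
  rw [Ideal.Quotient.mkₐ_eq_mk, Ideal.Quotient.eq_zero_iff_mem.2 hBm] at this
  exact this.symm

/-- Every polynomial function on `M_n(ℂ) × M_n(ℂ)` invariant under
simultaneous conjugation agrees at every point of `Ĉ_n` with some element of the
ℂ-subalgebra generated by `{(X,Y) ↦ tr(X^a Y^b) : 0 ≤ a, b ≤ n}`. -/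
theorem stmt_1 (n : ℕ) (hn : 1 ≤ n) (f : PolyFun n)
    (hf : ∀ g : GL (Fin n) ℂ, ∀ X Y : Matrix (Fin n) (Fin n) ℂ,
      evalP ((g : Matrix (Fin n) (Fin n) ℂ) * X * ((g⁻¹ : GL (Fin n) ℂ) : Matrix (Fin n) (Fin n) ℂ))
            ((g : Matrix (Fin n) (Fin n) ℂ) * Y * ((g⁻¹ : GL (Fin n) ℂ) : Matrix (Fin n) (Fin n) ℂ)) f
        = evalP X Y f) :
    ∃ g ∈ Algebra.adjoin ℂ {F : PolyFun n | ∃ a b : ℕ, a ≤ n ∧ b ≤ n ∧ F = trXY n a b},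
      ∀ P ∈ Chat n, evalP P.1 P.2 f = evalP P.1 P.2 g := by
  let φ : PolyFun n →ₐ[ℂ] (Chat n → ℂ) := MvPolynomial.aeval
    (Sum.elim (fun q p => p.1.1 q.1 q.2) (fun q p => p.1.2 q.1 q.2))
  have hφ : ∀ F p, φ F p = evalP p.1.1 p.1.2 F := by
    intro F p
    have h : ((Pi.evalAlgHom ℂ (fun _ : Chat n => ℂ) p).comp φ) F =
        MvPolynomial.aeval (Sum.elim (fun q => p.1.1 q.1 q.2) (fun q => p.1.2 q.1 q.2)) F := by
      congr 1
      refine MvPolynomial.algHom_ext fun s => ?_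
      rcases s with s | s <;> simp [φ]
    exact h
  let x : Matrix (Fin n) (Fin n) (Chat n → ℂ) := Matrix.of fun i j p => p.1.1 i j
  let y : Matrix (Fin n) (Fin n) (Chat n → ℂ) := Matrix.of fun i j p => p.1.2 i j
  have hx : φ.mapMatrix (Xmat n) = x := by
    ext i j : 2
    simp [φ, Xmat, x]
  have hy : φ.mapMatrix (Ymat n) = y := by
    ext i j : 2
    simp [φ, Ymat, y]
  choose v w hvw using fun p : Chat n => exists_eq_vecMulVec_of_rank_eq_one _ p.2
  have hmem := invariant_mem_of_trace_mem
    ((Algebra.adjoin ℂ {F : PolyFun n | ∃ a b : ℕ, a ≤ n ∧ b ≤ n ∧ F = trXY n a b}).map φ) x y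
    (fun i p => v p i) (fun i p => w p i) Complex.I Complex.I_ne_zero
    (by
      ext i j p
      have h := congrFun (congrFun (hvw p) i) j
      rcases eq_or_ne i j with rfl | hij
      · simpa [x, y, Matrix.mul_apply, Matrix.vecMulVec_apply] using h
      · simpa [x, y, Matrix.mul_apply, Matrix.vecMulVec_apply, hij] using h)
    (fun a b ha hb => ⟨trXY n a b, Algebra.subset_adjoin ⟨a, b, ha, hb, rfl⟩, by
      rw [← hx, ← hy, ← map_pow, ← map_pow, ← map_mul]
      exact AddMonoidHom.map_trace φ _⟩) f hf
  obtain ⟨g, hg, hgf⟩ := hmem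
  refine ⟨g, hg, fun P hP => ?_⟩
  rw [← hφ g ⟨P, hP⟩]
  exact (congrFun hgf ⟨P, hP⟩).symm
end

section
/- For all integers j, k, p, q ≥ 1, there exists a polynomial function h on M_n(ℂ) × M_n(ℂ), expressible as a polynomial with complex coefficients in traces of matrix monomials of degree at most j+k+p+q−6, such that at every point of Ĉ_n: {tr A^j B^k, tr A^p B^q} = (jq − kp) · tr(A^{j+p−1} B^{k+q−1}) − (1/n)·( jq · tr(A^{j−1}B^k) · tr(A^p B^{q−1}) − kp · tr(A^j B^{k−1}) · tr(A^{p−1} B^q) ) + h. -/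
open MvPolynomial Matrix

/-- A matrix monomial `(X,Y) ↦ X^{p₁} Y^{q₁} ⋯ X^{p_m} Y^{q_m}`, encoded by the
list of exponent pairs `[(p₁,q₁), …, (p_m,q_m)]`. -/
noncomputable def matMono (n : ℕ) (L : List (ℕ × ℕ)) : Matrix (Fin n) (Fin n) (PolyFun n) :=
  L.foldr (fun pq M => Xmat n ^ pq.1 * Ymat n ^ pq.2 * M) 1

/-- The degree `p₁ + ⋯ + p_m + q₁ + ⋯ + q_m` of a matrix monomial. -/
def monoDeg (L : List (ℕ × ℕ)) : ℕ := (L.map fun pq => pq.1 + pq.2).sum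

/-- The value of a word in two matrices: `true` stands for `A` and `false` for `B`. -/
def wordProd {n R : Type*} [Fintype n] [DecidableEq n] [CommRing R] (A B : Matrix n n R)
    (w : List Bool) : Matrix n n R :=
  (w.map fun b => cond b A B).prod

/-- The subalgebra generated by the traces of words of length at most `m` in two matrices. -/
def traceAlg (K : Type*) {n R : Type*} [Fintype n] [DecidableEq n] [Field K] [CommRing R]
    [Algebra K R] (A B : Matrix n n R) (m : ℤ) : Subalgebra K R :=
  Algebra.adjoin K {r | ∃ w : List Bool, (w.length : ℤ) ≤ m ∧ r = trace (wordProd A B w)}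

section Words

variable {K n R : Type*} [Fintype n] [DecidableEq n] [Field K] [CommRing R] [Algebra K R]
  (A B : Matrix n n R)

@[simp]
theorem wordProd_nil : wordProd A B [] = 1 := rfl

@[simp]
theorem wordProd_cons (b : Bool) (w : List Bool) :
    wordProd A B (b :: w) = cond b A B * wordProd A B w := by
  simp [wordProd]

@[simp]
theorem wordProd_append (u v : List Bool) :
    wordProd A B (u ++ v) = wordProd A B u * wordProd A B v := by
  simp [wordProd]

@[simp]
theorem wordProd_replicate (b : Bool) (k : ℕ) :
    wordProd A B (List.replicate k b) = cond b A B ^ k := by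
  simp [wordProd]

theorem traceAlg_mono {m m' : ℤ} (h : m ≤ m') : traceAlg K A B m ≤ traceAlg K A B m' :=
  Algebra.adjoin_mono fun _ ⟨w, hw, hr⟩ => ⟨w, hw.trans h, hr⟩

theorem trace_wordProd_mem {m : ℤ} {w : List Bool} (h : (w.length : ℤ) ≤ m) :
    trace (wordProd A B w) ∈ traceAlg K A B m :=
  Algebra.subset_adjoin ⟨w, h, rfl⟩

/-- A function on words of a given length that is invariant, modulo a subalgebra, under swapping
adjacent distinct letters is invariant under all permutations. -/
theorem sub_mem_of_perm (S : Subalgebra K R) (f : List Bool → R) (d : ℕ)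
    (hf : ∀ u v : List Bool, u.length + v.length + 2 = d →
      f (u ++ true :: false :: v) - f (u ++ false :: true :: v) ∈ S)
    {w w' : List Bool} (h : w.Perm w') (hw : w.length = d) : f w - f w' ∈ S := by
  suffices H : ∀ u : List Bool, u.length + w.length = d → f (u ++ w) - f (u ++ w') ∈ S from
    H [] (by simpa using hw)
  clear hw
  induction h with
  | nil => intro u _; simp
  | cons x _ ih =>
    intro u hu
    simpa using ih (u ++ [x]) (by simp at hu ⊢; omega)
  | swap x y l =>
    intro u hu
    have hl : u.length + l.length + 2 = d := by simp at hu; omega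
    cases x <;> cases y
    · simp
    · exact hf u l hl
    · simpa using neg_mem (hf u l hl)
    · simp
  | trans h₁ h₂ ih₁ ih₂ =>
    intro u hu
    simpa using add_mem (ih₁ u hu) (ih₂ u (by rw [← h₁.length_eq]; exact hu))

variable {A B} {c : K} {E : Matrix n n R}

/-- Moving `A` from the right to the left across a word, when commuting two letters yields
terms controlled by a function `g` of words. -/
theorem trace_commutator_add_mem (S : Subalgebra K R) (g : List Bool → R) (d : ℕ)
    (hg : ∀ u v : List Bool, trace (wordProd A B u * (A * B - B * A) * wordProd A B v) = g (v ++ u))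
    (hperm : ∀ w w' : List Bool, w.Perm w' → w.length = d → g w - g w' ∈ S) :
    ∀ w u : List Bool, u.length + w.length = d →
      trace (wordProd A B u * (wordProd A B w * A - A * wordProd A B w) * B)
        + (w.count false : R) * g (u ++ w) ∈ S := by
  intro w
  induction w with
  | nil => intro u _; simp
  | cons x w ih =>
    intro u hu
    have h := ih (u ++ [x]) (by simp at hu ⊢; omega)
    cases x
    · have h2 := hperm (u ++ false :: w) ((w ++ [false]) ++ u)
        (by
          simp only [List.perm_iff_count, List.count_append, List.count_cons, List.count_nil]
          intros; omega) (by simpa using hu)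
      have h3 := hg u (w ++ [false])
      simp only [wordProd_append, wordProd_cons, cond_false, wordProd_nil, mul_one] at h h3
      rw [← h3] at h2
      convert add_mem h h2 using 1
      simp only [List.append_assoc, List.cons_append, List.nil_append, List.count_cons_self,
        wordProd_cons, cond_false, Nat.cast_add, Nat.cast_one]
      rw [add_mul, one_mul]
      have : wordProd A B u * (B * wordProd A B w * A - A * (B * wordProd A B w)) * B
        = wordProd A B u * B * (wordProd A B w * A - A * wordProd A B w) * B
          - wordProd A B u * (A * B - B * A) * (wordProd A B w * B) := by noncomm_ring
      rw [this, trace_sub]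
      ring
    · convert h using 3
      · simp; noncomm_ring
      · simp
      · simp

/-- Let `E = [A, B] - c` be of rank one, in the sense that the form `tr (U E)` is multiplicative.
Then `tr (W E) + c tr W` is a polynomial in traces of words shorter by two letters than `W`. -/
theorem trace_mul_add_mem [CharZero K] (hE : A * B - B * A = E + c • (1 : Matrix n n R))
    (hE' : ∀ U V : Matrix n n R, trace (U * E * (V * E)) = trace (U * E) * trace (V * E))
    (w : List Bool) :
    trace (wordProd A B w * E) + c • trace (wordProd A B w)
      ∈ traceAlg K A B ((w.length : ℤ) - 2) := by
  induction hd : w.length using Nat.strong_induction_on generalizing w with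
  | _ d ih =>
  set g : List Bool → R := fun w => trace (wordProd A B w * E) + c • trace (wordProd A B w)
    with hgdef
  have hg : ∀ u v : List Bool,
      trace (wordProd A B u * (A * B - B * A) * wordProd A B v) = g (v ++ u) := by
    intro u v
    rw [hE, trace_mul_comm, hgdef]
    simp [mul_add, mul_assoc]
  have htr : ∀ w w' : List Bool, w.Perm w' → w.length = d →
      trace (wordProd A B w) - trace (wordProd A B w') ∈ traceAlg K A B ((d : ℤ) - 2) := by
    intro w w' h hw
    refine sub_mem_of_perm _ (fun w => trace (wordProd A B w)) d (fun u v huv => ?_) h hw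
    have h1 := ih (v ++ u).length (by simp; omega) (v ++ u) rfl
    change g (v ++ u) ∈ _ at h1
    rw [← hg] at h1
    convert traceAlg_mono A B ?_ h1 using 1
    · rw [← trace_sub]; congr 1; simp; noncomm_ring
    · simp; omega
  have hE2 : ∀ u : List Bool, u.length < d →
      trace (wordProd A B u * E) ∈ traceAlg K A B (u.length : ℤ) := by
    intro u hu
    have h1 := traceAlg_mono A B (show (u.length : ℤ) - 2 ≤ u.length by omega) (ih _ hu u rfl)
    simpa using sub_mem h1 (Subalgebra.smul_mem _ (trace_wordProd_mem (K := K) A B le_rfl) c)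
  have hφ : ∀ w w' : List Bool, w.Perm w' → w.length = d →
      trace (wordProd A B w * E) - trace (wordProd A B w' * E)
        ∈ traceAlg K A B ((d : ℤ) - 2) := by
    intro w w' h hw
    refine sub_mem_of_perm _ (fun w => trace (wordProd A B w * E)) d (fun u v huv => ?_) h hw
    have h1 := traceAlg_mono A B (show ((u ++ v).length : ℤ) ≤ d - 2 by simp; omega)
      (hE2 (u ++ v) (by simp; omega))
    have h2 := traceAlg_mono A B (show (u.length : ℤ) ≤ d - 2 by omega) (hE2 u (by omega))
    have h3 := traceAlg_mono A B (show (v.length : ℤ) ≤ d - 2 by omega) (hE2 v (by omega))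
    convert add_mem (mul_mem h2 h3) (Subalgebra.smul_mem _ h1 c) using 1
    rw [← hE', ← trace_smul, ← trace_add, ← trace_sub]
    congr 1
    have : wordProd A B u * (A * B - B * A) * wordProd A B v * E
        = wordProd A B u * (E + c • (1 : Matrix n n R)) * wordProd A B v * E := by rw [hE]
    simp only [wordProd_append, wordProd_cons, cond_true, cond_false]
    calc _ = wordProd A B u * (A * B - B * A) * wordProd A B v * E := by noncomm_ring
      _ = _ := by rw [this]; simp [mul_add, add_mul, mul_assoc]
  have hperm : ∀ w w' : List Bool, w.Perm w' → w.length = d →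
      g w - g w' ∈ traceAlg K A B ((d : ℤ) - 2) := by
    intro w w' h hw
    convert add_mem (hφ w w' h hw) (Subalgebra.smul_mem _ (htr w w' h hw) c) using 1
    simp only [hgdef, smul_sub]; ring
  have h := trace_commutator_add_mem _ g d hg hperm w [] (by simpa using hd)
  have h2 : trace (wordProd A B [] * (wordProd A B w * A - A * wordProd A B w) * B) = g w := by
    have := hg w []
    simp only [wordProd_nil, mul_one, List.nil_append, one_mul] at this ⊢
    rw [← this]
    simp only [mul_sub, sub_mul, trace_sub]
    rw [mul_assoc A, trace_mul_comm A]
    simp only [mul_assoc]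
  rw [h2, List.nil_append] at h
  have h3 : ((w.count false : K) + 1) ≠ 0 := Nat.cast_add_one_ne_zero _
  have h4 := Subalgebra.smul_mem _ h ((w.count false : K) + 1)⁻¹
  convert h4 using 1
  rw [eq_inv_smul_iff₀ h3, Algebra.smul_def]
  simp only [map_add, map_natCast, map_one]
  ring

/-- If `[A, B] - c` is of rank one, then permuting the letters of a word changes its trace by
a polynomial in traces of words shorter by four letters. -/
theorem trace_sub_mem_of_perm [CharZero K] (hE : A * B - B * A = E + c • (1 : Matrix n n R))
    (hE' : ∀ U V : Matrix n n R, trace (U * E * (V * E)) = trace (U * E) * trace (V * E))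
    {w w' : List Bool} (h : w.Perm w') :
    trace (wordProd A B w) - trace (wordProd A B w')
      ∈ traceAlg K A B ((w.length : ℤ) - 4) := by
  refine sub_mem_of_perm _ (fun w => trace (wordProd A B w)) w.length (fun u v huv => ?_) h rfl
  have h1 := trace_mul_add_mem hE hE' (v ++ u)
  convert traceAlg_mono A B ?_ h1 using 1
  · rw [← trace_smul, ← trace_add, ← trace_sub]
    have : wordProd A B (v ++ u) * E + c • wordProd A B (v ++ u)
        = wordProd A B v * (wordProd A B u * (A * B - B * A)) := by
      rw [hE]; simp [mul_add, mul_assoc]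
    rw [this, trace_mul_comm]
    congr 1; simp; noncomm_ring
  · simp; omega

end Words

section Words

variable {K n R : Type*} [Fintype n] [DecidableEq n] [Field K] [CommRing R] [Algebra K R]

/-- Subtracting from two matrices scalar multiples of their traces does not enlarge the
subalgebra generated by traces of words of bounded length. -/
theorem traceAlg_sub_smul_le (X Y : Matrix n n R) (a b : K) (m : ℤ) :
    traceAlg K (X - (algebraMap K R a * trace X) • (1 : Matrix n n R))
      (Y - (algebraMap K R b * trace Y) • (1 : Matrix n n R)) m ≤ traceAlg K X Y m := by
  refine Algebra.adjoin_le ?_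
  rintro _ ⟨w, hw, rfl⟩
  set A := X - (algebraMap K R a * trace X) • (1 : Matrix n n R) with hA
  set B := Y - (algebraMap K R b * trace Y) • (1 : Matrix n n R) with hB
  suffices H : ∀ u : List Bool, (u.length : ℤ) + w.length ≤ m →
      trace (wordProd X Y u * wordProd A B w) ∈ traceAlg K X Y m by
    simpa using H [] (by simpa using hw)
  clear hw
  induction w with
  | nil => intro u hu; simpa using trace_wordProd_mem X Y (by simpa using hu)
  | cons x w ih =>
    intro u hu
    simp only [List.length_cons, Nat.cast_add, Nat.cast_one] at hu
    have h1 := ih (u ++ [x]) (by simp; omega)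
    have h2 := ih u (by omega)
    have h3 : trace (wordProd X Y [x]) ∈ traceAlg K X Y m :=
      trace_wordProd_mem X Y (by simp; omega)
    cases x
    · convert sub_mem h1 (mul_mem (mul_mem (Subalgebra.algebraMap_mem _ b) h3) h2) using 1
      simp [hB, mul_sub, sub_mul, mul_assoc]
    · convert sub_mem h1 (mul_mem (mul_mem (Subalgebra.algebraMap_mem _ a) h3) h2) using 1
      simp [hA, mul_sub, sub_mul, mul_assoc]

theorem wordProd_map {S : Type*} [CommRing S] (f : R →+* S) (A B : Matrix n n R)
    (w : List Bool) :
    wordProd (f.mapMatrix A) (f.mapMatrix B) w = f.mapMatrix (wordProd A B w) := by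
  induction w with
  | nil => simp
  | cons b w ih => cases b <;> simp only [wordProd_cons, cond_true, cond_false, ih, map_mul]

theorem traceAlg_map {S : Type*} [CommRing S] [Algebra K S] (f : R →ₐ[K] S)
    (A B : Matrix n n R) (m : ℤ) :
    traceAlg K ((f : R →+* S).mapMatrix A) ((f : R →+* S).mapMatrix B) m
      ≤ (traceAlg K A B m).map f := by
  refine Algebra.adjoin_le ?_
  rintro _ ⟨w, hw, rfl⟩
  refine ⟨_, trace_wordProd_mem A B hw, ?_⟩
  rw [wordProd_map]
  exact AddMonoidHom.map_trace f (wordProd A B w)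

end Words

section Rank

variable {m n K : Type*} [Fintype n] [DecidableEq n] [Field K]

theorem exists_eq_vecMulVec_of_rank_eq_one_s5 {M : Matrix m n K} (h : M.rank = 1) :
    ∃ (e : m → K) (f : n → K), M = vecMulVec e f := by
  obtain ⟨⟨v, hv⟩, -, hv'⟩ := finrank_eq_one_iff'.1 h
  choose f hf using fun j : n => hv' ⟨M.mulVecLin (Pi.single j 1), LinearMap.mem_range_self _ _⟩
  refine ⟨v, f, ?_⟩
  ext i j
  have := congrFun (congrArg Subtype.val (hf j)) i
  simp at this
  rw [vecMulVec_apply, ← this, mul_comm]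

theorem trace_mul_mul_of_rank_eq_one {E : Matrix n n K} (h : E.rank = 1) (U V : Matrix n n K) :
    trace (U * E * (V * E)) = trace (U * E) * trace (V * E) := by
  obtain ⟨e, f, rfl⟩ := exists_eq_vecMulVec_of_rank_eq_one_s5 h
  simp only [mul_vecMulVec, trace_vecMulVec, vecMulVec_mulVec]
  simp [dotProduct_comm f, mul_comm]

end Rank

section Derivation

variable {n R K : Type*} [Fintype n] [CommRing R] [CommRing K] [Algebra K R]
  (D : Derivation K R R)

theorem map_mul_derivation (M N : Matrix n n R) :
    (M * N).map D = M.map D * N + M * N.map D := by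
  ext i j
  simp [mul_apply, Finset.sum_add_distrib, mul_comm, add_comm]

theorem derivation_trace (M : Matrix n n R) : D (trace M) = trace (M.map D) := by
  simp [trace]

theorem sum_sum_mul_eq_trace (M N : Matrix n n R) :
    ∑ j, ∑ k, M k j * N j k = trace (N * M) := by
  simp [trace, mul_apply, mul_comm]

end Derivation

section Gradient

variable {n R : Type*} [Fintype n] [DecidableEq n] [CommRing R]

/-- The gradient of `M ↦ tr (M ^ k * N)`. -/
def powGrad (M : Matrix n n R) (k : ℕ) (N : Matrix n n R) : Matrix n n R :=
  ∑ s ∈ Finset.range k, M ^ (k - 1 - s) * N * M ^ s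

theorem powGrad_succ (M : Matrix n n R) (k : ℕ) (N : Matrix n n R) :
    powGrad M (k + 1) N = M ^ k * N + powGrad M k (N * M) := by
  rw [powGrad, Finset.sum_range_succ', add_comm]
  congr 1
  · simp
  · refine Finset.sum_congr rfl fun s _ => ?_
    rw [pow_succ' M s, show k + 1 - 1 - (s + 1) = k - 1 - s by omega]
    simp only [mul_assoc]

theorem trace_powGrad (M : Matrix n n R) (k : ℕ) (N : Matrix n n R) :
    trace (powGrad M k N) = k * trace (M ^ (k - 1) * N) := by
  rw [powGrad, trace_sum, Finset.sum_congr rfl (g := fun _ => trace (M ^ (k - 1) * N))]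
  · simp
  · intro s hs
    rw [trace_mul_comm, ← mul_assoc, ← pow_add]
    congr 3
    have := Finset.mem_range.1 hs
    omega

theorem mapMatrix_powGrad {S : Type*} [CommRing S] (f : R →+* S) (M : Matrix n n R) (k : ℕ)
    (N : Matrix n n R) :
    f.mapMatrix (powGrad M k N) = powGrad (f.mapMatrix M) k (f.mapMatrix N) := by
  simp only [powGrad, map_sum, map_mul, map_pow]

/-- The traceless part of a matrix, where `c` is the inverse of the size. -/
def tracelessPart (c : R) (M : Matrix n n R) : Matrix n n R :=
  M - (c * trace M) • (1 : Matrix n n R)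

theorem tracelessPart_zero (c : R) : tracelessPart c (0 : Matrix n n R) = 0 := by
  simp [tracelessPart]

theorem trace_tracelessPart_mul {c : R} (hc : c * Fintype.card n = 1) (M N : Matrix n n R) :
    trace (tracelessPart c M * tracelessPart c N)
      = trace (M * N) - c * (trace M * trace N) := by
  simp only [tracelessPart, sub_mul, mul_sub, trace_sub, trace_smul, smul_mul_assoc, one_mul,
    mul_smul_comm, mul_one, trace_one, smul_eq_mul]
  linear_combination (c * trace M * trace N) * hc

variable {K : Type*} [CommRing K] [Algebra K R] (D : Derivation K R R)

theorem trace_map_pow_mul (M N : Matrix n n R) (k : ℕ) :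
    trace ((M ^ k).map D * N) = trace (M.map D * powGrad M k N) := by
  induction k generalizing N with
  | zero =>
    have : (1 : Matrix n n R).map D = 0 := by
      ext i j
      by_cases h : i = j <;> simp [one_apply, h]
    simp [powGrad, this]
  | succ k ih =>
    rw [pow_succ', map_mul_derivation, add_mul, trace_add, powGrad_succ, mul_add, trace_add,
      ← ih, mul_assoc, mul_assoc, trace_mul_comm M, mul_assoc]

theorem derivation_trace_pow_mul_pow (A B : Matrix n n R) (j k : ℕ) :
    D (trace (A ^ j * B ^ k))
      = trace (A.map D * powGrad A j (B ^ k)) + trace (B.map D * powGrad B k (A ^ j)) := by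
  rw [derivation_trace, map_mul_derivation, trace_add, trace_map_pow_mul,
    trace_mul_comm (A ^ j), trace_map_pow_mul]

theorem map_derivation_tracelessPart (c : K) (M : Matrix n n R) :
    (tracelessPart (algebraMap K R c) M).map D = tracelessPart (algebraMap K R c) (M.map D) := by
  ext i j
  by_cases h : i = j <;> simp [tracelessPart, h, derivation_trace]

theorem trace_tracelessPart_single_mul (a b : n) (c : R) (G : Matrix n n R) :
    trace (tracelessPart c (single a b 1) * G) = tracelessPart c G b a := by
  by_cases h : a = b
  · simp [h, sub_mul, tracelessPart, trace_single_mul]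
  · simp [h, Ne.symm h, tracelessPart, trace_single_mul]

end Gradient

section Polynomial

variable {n : ℕ}

theorem pderiv_inl_trAB (a b : Fin n) (j k : ℕ) :
    pderiv (Sum.inl (a, b)) (trAB n j k)
      = tracelessPart (C (n : ℂ)⁻¹) (powGrad (Amat n) j (Bmat n ^ k)) b a := by
  have hX : (Xmat n).map (pderiv (Sum.inl (a, b))) = single a b 1 := by
    ext i l : 2
    simp [Xmat, pderiv_X, Pi.single_apply, single_apply, eq_comm]
  have hY : (Ymat n).map (pderiv (Sum.inl (a, b))) = 0 := by
    ext i l : 2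
    simp [Ymat, pderiv_X]
  have h := derivation_trace_pow_mul_pow (pderiv (Sum.inl (a, b)))
    (tracelessPart (algebraMap ℂ _ (n : ℂ)⁻¹) (Xmat n))
    (tracelessPart (algebraMap ℂ _ (n : ℂ)⁻¹) (Ymat n)) j k
  rw [map_derivation_tracelessPart, map_derivation_tracelessPart, hX, hY, tracelessPart_zero,
    trace_tracelessPart_single_mul, zero_mul, trace_zero, add_zero] at h
  exact h

theorem pderiv_inr_trAB (a b : Fin n) (j k : ℕ) :
    pderiv (Sum.inr (a, b)) (trAB n j k)
      = tracelessPart (C (n : ℂ)⁻¹) (powGrad (Bmat n) k (Amat n ^ j)) b a := by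
  have hX : (Xmat n).map (pderiv (Sum.inr (a, b))) = 0 := by
    ext i l : 2
    simp [Xmat, pderiv_X]
  have hY : (Ymat n).map (pderiv (Sum.inr (a, b))) = single a b 1 := by
    ext i l : 2
    simp [Ymat, pderiv_X, Pi.single_apply, single_apply, eq_comm]
  have h := derivation_trace_pow_mul_pow (pderiv (Sum.inr (a, b)))
    (tracelessPart (algebraMap ℂ _ (n : ℂ)⁻¹) (Xmat n))
    (tracelessPart (algebraMap ℂ _ (n : ℂ)⁻¹) (Ymat n)) j k
  rw [map_derivation_tracelessPart, map_derivation_tracelessPart, hX, hY, tracelessPart_zero,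
    trace_tracelessPart_single_mul, zero_mul, trace_zero, zero_add] at h
  exact h

theorem pbracket_trAB (hn : 1 ≤ n) (j k p q : ℕ) :
    pbracket (trAB n j k) (trAB n p q)
      = trace (powGrad (Amat n) j (Bmat n ^ k) * powGrad (Bmat n) q (Amat n ^ p))
        - trace (powGrad (Amat n) p (Bmat n ^ q) * powGrad (Bmat n) k (Amat n ^ j))
        - C (n : ℂ)⁻¹ * (C ((j : ℂ) * q) * (trAB n (j - 1) k * trAB n p (q - 1))
          - C ((k : ℂ) * p) * (trAB n j (k - 1) * trAB n (p - 1) q)) := by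
  have hc : C (n : ℂ)⁻¹ * ((Fintype.card (Fin n) : ℕ) : PolyFun n) = 1 := by
    rw [Fintype.card_fin, ← map_natCast (C : ℂ →+* PolyFun n), ← map_mul,
      inv_mul_cancel₀ (by exact_mod_cast (by omega : n ≠ 0)), map_one]
  have h : pbracket (trAB n j k) (trAB n p q)
      = trace (tracelessPart (C (n : ℂ)⁻¹) (powGrad (Amat n) j (Bmat n ^ k))
          * tracelessPart (C (n : ℂ)⁻¹) (powGrad (Bmat n) q (Amat n ^ p)))
        - trace (tracelessPart (C (n : ℂ)⁻¹) (powGrad (Amat n) p (Bmat n ^ q))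
          * tracelessPart (C (n : ℂ)⁻¹) (powGrad (Bmat n) k (Amat n ^ j))) := by
    rw [pbracket]
    simp only [pderiv_inl_trAB, pderiv_inr_trAB, Finset.sum_sub_distrib]
    rw [sum_sum_mul_eq_trace, sum_sum_mul_eq_trace, trace_mul_comm]
  rw [h, trace_tracelessPart_mul hc, trace_tracelessPart_mul hc]
  simp only [trace_powGrad, trAB, map_mul, map_natCast]
  rw [trace_mul_comm (Bmat n ^ _), trace_mul_comm (Bmat n ^ _)]
  ring

theorem traceAlg_le_adjoin_matMono (m : ℤ) :
    traceAlg ℂ (Xmat n) (Ymat n) m ≤ Algebra.adjoin ℂ {F : PolyFun n | ∃ L : List (ℕ × ℕ),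
        (monoDeg L : ℤ) ≤ m ∧ F = Matrix.trace (matMono n L)} := by
  refine Algebra.adjoin_mono ?_
  rintro _ ⟨w, hw, rfl⟩
  refine ⟨w.map fun b => cond b (1, 0) (0, 1), le_of_eq_of_le ?_ hw, congrArg trace ?_⟩
  · congr 1
    clear hw
    induction w with
    | nil => rfl
    | cons b w ih => cases b <;> simp [monoDeg] at ih ⊢ <;> omega
  · clear hw
    induction w with
    | nil => rfl
    | cons b w ih => cases b <;> simp [matMono] at ih ⊢ <;> rw [ih]

end Polynomial

section Reorder

variable {K n R : Type*} [Fintype n] [DecidableEq n] [Field K] [CharZero K] [CommRing R]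
  [Algebra K R] {A B E : Matrix n n R} {c : K}

theorem trace_powGrad_mul_powGrad_sub_mem (hE : A * B - B * A = E + c • (1 : Matrix n n R))
    (hE' : ∀ U V : Matrix n n R, trace (U * E * (V * E)) = trace (U * E) * trace (V * E))
    (j k p q : ℕ) (hk : 1 ≤ k) (hp : 1 ≤ p) :
    trace (powGrad A j (B ^ k) * powGrad B q (A ^ p))
        - (j * q : R) * trace (A ^ (j + p - 1) * B ^ (k + q - 1))
      ∈ traceAlg K A B ((j : ℤ) + k + p + q - 6) := by
  have h : trace (powGrad A j (B ^ k) * powGrad B q (A ^ p))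
        - (j * q : R) * trace (A ^ (j + p - 1) * B ^ (k + q - 1))
      = ∑ s ∈ Finset.range j, ∑ t ∈ Finset.range q,
        (trace ((A ^ (j - 1 - s) * B ^ k * A ^ s) * (B ^ (q - 1 - t) * A ^ p * B ^ t))
          - trace (A ^ (j + p - 1) * B ^ (k + q - 1))) := by
    simp [powGrad, Finset.sum_mul_sum, trace_sum, mul_assoc]
  rw [h]
  refine sum_mem fun s hs => sum_mem fun t ht => ?_
  rw [Finset.mem_range] at hs ht
  have hperm : (List.replicate (j - 1 - s) true ++ List.replicate k false
      ++ List.replicate s true ++ (List.replicate (q - 1 - t) false ++ List.replicate p true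
      ++ List.replicate t false)).Perm
      (List.replicate (j + p - 1) true ++ List.replicate (k + q - 1) false) := by
    rw [List.perm_iff_count]
    intro b
    cases b <;> simp [List.count_replicate] <;> omega
  convert traceAlg_mono A B ?_ (trace_sub_mem_of_perm hE hE' hperm) using 1
  · simp [mul_assoc]
  · simp; omega

end Reorder

section Evaluation

variable {n : ℕ}

/-- Restriction of polynomial functions to the Calogero–Moser variety. -/
noncomputable def restrictChat (n : ℕ) : PolyFun n →ₐ[ℂ] (Chat n → ℂ) :=
  AlgHom.pi fun P => aeval (Sum.elim (fun p => P.1.1 p.1 p.2) fun p => P.1.2 p.1 p.2)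

theorem restrictChat_apply (F : PolyFun n) (P : Chat n) :
    restrictChat n F P = evalP P.1.1 P.1.2 F := by
  simp [restrictChat, evalP, aeval_eq_eval]

/-- The commutator `[A, B]` minus `i`, restricted to the Calogero–Moser variety. -/
theorem restrictChat_rank_one (U V : Matrix (Fin n) (Fin n) (Chat n → ℂ)) :
    let f := (restrictChat n : PolyFun n →+* (Chat n → ℂ)).mapMatrix
    let E := f (Amat n) * f (Bmat n) - f (Bmat n) * f (Amat n)
      - Complex.I • (1 : Matrix (Fin n) (Fin n) (Chat n → ℂ))
    trace (U * E * (V * E)) = trace (U * E) * trace (V * E) := by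
  intro f E
  funext P
  have key : (Pi.evalRingHom (fun _ : Chat n => ℂ) P).mapMatrix E
      = P.1.1 * P.1.2 - P.1.2 * P.1.1 - Complex.I • (1 : Matrix (Fin n) (Fin n) ℂ) := by
    have hX : ∀ a b, restrictChat n (Xmat n a b) P = P.1.1 a b := fun a b => by
      simp [restrictChat, Xmat]
    have hY : ∀ a b, restrictChat n (Ymat n a b) P = P.1.2 a b := fun a b => by
      simp [restrictChat, Ymat]
    have hf : ∀ M : Matrix (Fin n) (Fin n) (PolyFun n), f M = M.map (restrictChat n) :=
      fun _ => rfl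
    have hcomm : Amat n * Bmat n - Bmat n * Amat n = Xmat n * Ymat n - Ymat n * Xmat n := by
      simp only [Amat, Bmat, mul_sub, sub_mul, smul_mul_assoc, mul_smul_comm, one_mul, mul_one,
        smul_sub]
      rw [smul_comm]
      abel
    have hE : E = f (Xmat n) * f (Ymat n) - f (Ymat n) * f (Xmat n)
        - Complex.I • (1 : Matrix (Fin n) (Fin n) (Chat n → ℂ)) := by
      simp only [E, ← map_mul, ← map_sub, hcomm]
    rw [hE]
    ext a b
    by_cases hab : a = b <;> simp [hf, mul_apply, hX, hY, hab]
  have htr : ∀ M : Matrix (Fin n) (Fin n) (Chat n → ℂ),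
      trace M P = trace ((Pi.evalRingHom (fun _ : Chat n => ℂ) P).mapMatrix M) := fun M =>
    AddMonoidHom.map_trace (Pi.evalRingHom (fun _ : Chat n => ℂ) P) M
  rw [Pi.mul_apply, htr, htr, htr]
  simp only [map_mul]
  refine trace_mul_mul_of_rank_eq_one ?_ _ _
  rw [key]
  exact P.2

end Evaluation

/-- for `j, k, p, q ≥ 1` there is a polynomial function `h`,
a polynomial in traces of matrix monomials of degree at most `j+k+p+q−6`,
such that at every point of `Ĉ_n`:
`{tr A^j B^k, tr A^p B^q} = (jq−kp) tr(A^{j+p−1}B^{k+q−1})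
 − (1/n)(jq tr(A^{j−1}B^k) tr(A^p B^{q−1}) − kp tr(A^j B^{k−1}) tr(A^{p−1}B^q)) + h`. -/
theorem stmt_5 (n : ℕ) (hn : 1 ≤ n) (j k p q : ℕ)
    (hj : 1 ≤ j) (hk : 1 ≤ k) (hp : 1 ≤ p) (hq : 1 ≤ q) :
    ∃ h ∈ Algebra.adjoin ℂ {F : PolyFun n | ∃ L : List (ℕ × ℕ),
        (monoDeg L : ℤ) ≤ (j : ℤ) + (k : ℤ) + (p : ℤ) + (q : ℤ) - 6 ∧
        F = Matrix.trace (matMono n L)},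
      ∀ P ∈ Chat n,
        evalP P.1 P.2 (pbracket (trAB n j k) (trAB n p q))
          = evalP P.1 P.2
              (MvPolynomial.C ((j : ℂ) * (q : ℂ) - (k : ℂ) * (p : ℂ)) *
                  trAB n (j + p - 1) (k + q - 1)
                - MvPolynomial.C ((n : ℂ)⁻¹) *
                    (MvPolynomial.C ((j : ℂ) * (q : ℂ)) *
                        (trAB n (j - 1) k * trAB n p (q - 1))
                      - MvPolynomial.C ((k : ℂ) * (p : ℂ)) *
                        (trAB n j (k - 1) * trAB n (p - 1) q))
                + h) := by
  set φ := (restrictChat n : PolyFun n →+* (Chat n → ℂ)) with hφ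
  have hE := (sub_add_cancel (φ.mapMatrix (Amat n) * φ.mapMatrix (Bmat n)
    - φ.mapMatrix (Bmat n) * φ.mapMatrix (Amat n))
    (Complex.I • (1 : Matrix (Fin n) (Fin n) (Chat n → ℂ)))).symm
  have hE' := restrictChat_rank_one (n := n)
  have h1 := trace_powGrad_mul_powGrad_sub_mem hE hE' j k p q hk hp
  have h2 := trace_powGrad_mul_powGrad_sub_mem hE hE' p q j k hq hj
  rw [show (p : ℤ) + q + j + k - 6 = j + k + p + q - 6 by ring, add_comm p j, add_comm q k] at h2
  obtain ⟨h, hh, hh'⟩ := traceAlg_map (restrictChat n) _ _ _ (sub_mem h1 h2)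
  refine ⟨h, traceAlg_le_adjoin_matMono _ (traceAlg_sub_smul_le _ _ _ _ _ hh), fun P hP => ?_⟩
  rw [← restrictChat_apply _ ⟨P, hP⟩, ← restrictChat_apply _ ⟨P, hP⟩]
  refine congrFun ?_ _
  have htr : ∀ M : Matrix (Fin n) (Fin n) (PolyFun n),
      trace (φ.mapMatrix M) = restrictChat n (trace M) := fun M =>
    (AddMonoidHom.map_trace (restrictChat n) M).symm
  simp only [← mapMatrix_powGrad, ← map_pow, ← map_mul, htr] at hh'
  rw [pbracket_trAB hn, map_add, show restrictChat n h = _ from hh']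
  simp only [trAB, map_sub, map_mul, map_natCast]
  ring
end
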